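/- Let A be a bialgebra over K and H a Hopf algebra over K, and suppose i : H → A and π : A → H are bialgebra morphisms with π ∘ i = id_H. Define a·h = a i(h) for a ∈ A, h ∈ H, and δ_R : A → A ⊗ H by δ_R(a) = ∑ a₍₁₎ ⊗ π(a₍₂₎). Then A is a right H-Hopf module algebra with these structures: δ_R is a coassociative counital right H-coaction, δ_R(a·h) = δ_R(a)Δ(h), (ab)·h = a(b·h), and δ_R(ab) = ∑ a₍₁₎b₍₁₎ ⊗ π(a₍₂₎)π(b₍₂₎) for all a, b ∈ A and h ∈ H. -/

import Mathlib

/-!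
STATEMENT 8: Let `A` be a bialgebra, `H` a Hopf algebra, and `i : H → A`, `π : A → H`
bialgebra morphisms with `π ∘ i = id`. Then `A` is a right `H`-Hopf module algebra with
`a · h = a i(h)` and `δ_R(a) = ∑ a₍₁₎ ⊗ π(a₍₂₎)`: `δ_R` is a coassociative counital right
coaction, `δ_R(a · h) = δ_R(a)Δ(h)`, `(ab) · h = a(b · h)`, and
`δ_R(ab) = ∑ a₍₁₎b₍₁₎ ⊗ π(a₍₂₎)π(b₍₂₎)`.
-/

open TensorProduct Coalgebra HopfAlgebra LinearMap

/-!
Coassociativity, counitality and multiplicativity of `δ_R = (id ⊗ π) ∘ Δ` are inherited from `Δ`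
along `π`. Since `π ∘ i = id`, the section `i` is colinear, `δ_R ∘ i = (i ⊗ id) ∘ Δ`;
multiplicativity then gives `δ_R(a i(h)) = δ_R(a) · (i ⊗ id)(Δ(h))`, which is
`δ_R(a)Δ(h)` for the diagonal action.
-/

section Coalgebra

variable {R C D : Type*} [CommSemiring R] [AddCommMonoid C] [Module R C] [Coalgebra R C]
  [AddCommMonoid D] [Module R D] [Coalgebra R D]

/-- The right coaction `c ↦ ∑ c₍₁₎ ⊗ π(c₍₂₎)` of `D` on `C` obtained by corestricting the regular
coaction of `C` on itself along a coalgebra morphism `π : C → D`. It is a bare linear map: its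
comodule axioms are `coactionAlong_coassoc` and `lTensor_counit_coactionAlong`. -/
def coactionAlong (π : C →ₗc[R] D) : C →ₗ[R] C ⊗[R] D :=
  (π : C →ₗ[R] D).lTensor C ∘ₗ comul

theorem coactionAlong_coassoc (π : C →ₗc[R] D) (c : C) :
    TensorProduct.assoc R C D D ((coactionAlong π).rTensor D (coactionAlong π c)) =
      (comul (R := R) (A := D)).lTensor C (coactionAlong π c) := by
  set p : C →ₗ[R] D := (π : C →ₗ[R] D)
  calc TensorProduct.assoc R C D D ((coactionAlong π).rTensor D (coactionAlong π c))
      = TensorProduct.assoc R C D D (map (map .id p) p (comul.rTensor C (comul c))) := by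
        rw [map_rTensor, coactionAlong, comp_apply, rTensor, map_lTensor, id_comp, lTensor_def]
    _ = (map p p).lTensor C (TensorProduct.assoc R C C C (comul.rTensor C (comul c))) :=
        (map_map_assoc .id p p _).symm
    _ = (map p p ∘ₗ comul).lTensor C (comul c) := by
        rw [coassoc_apply, lTensor_comp_apply]
    _ = comul.lTensor C (coactionAlong π c) := by
        rw [CoalgHomClass.map_comp_comul, lTensor_comp_apply]
        rfl

theorem lTensor_counit_coactionAlong (π : C →ₗc[R] D) (c : C) :
    (counit (R := R) (A := D)).lTensor C (coactionAlong π c) = c ⊗ₜ[R] 1 := by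
  rw [coactionAlong, comp_apply, ← lTensor_comp_apply, CoalgHomClass.counit_comp,
    lTensor_counit_comul]

theorem coactionAlong_apply_of_leftInverse {π : C →ₗc[R] D} {i : D →ₗc[R] C}
    (hπi : Function.LeftInverse π i) (d : D) :
    coactionAlong π (i d) = (i : D →ₗ[R] C).rTensor D (comul d) := by
  have hcomp : (π : C →ₗ[R] D) ∘ₗ (i : D →ₗ[R] C) = .id := LinearMap.ext hπi
  rw [coactionAlong, comp_apply, ← CoalgHomClass.map_comp_comul_apply, lTensor_map, hcomp,
    rTensor_def]

end Coalgebra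

theorem coactionAlong_mul {R A H : Type*} [CommSemiring R] [Semiring A] [Bialgebra R A]
    [Semiring H] [Bialgebra R H] (π : A →ₐc[R] H) (a b : A) :
    coactionAlong (π : A →ₗc[R] H) (a * b) =
      coactionAlong (π : A →ₗc[R] H) a * coactionAlong (π : A →ₗc[R] H) b :=
  map_mul ((Algebra.TensorProduct.map (.id R A) (π : A →ₐ[R] H)).comp (Bialgebra.comulAlgHom R A))
    a b

theorem map_mul'_tensorTensorTensorComm_tmul {R A B C : Type*} [CommSemiring R]
    [Semiring A] [Algebra R A] [AddCommMonoid B] [Module R B] [Semiring C] [Algebra R C]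
    (f : B →ₗ[R] A) (x : A ⊗[R] C) (y : B ⊗[R] C) :
    map (mul' R A ∘ₗ f.lTensor A) (mul' R C) (tensorTensorTensorComm R A C B C (x ⊗ₜ[R] y)) =
      x * f.rTensor C y := by
  suffices map (mul' R A ∘ₗ f.lTensor A) (mul' R C) ∘ₗ
      (tensorTensorTensorComm R A C B C).toLinearMap =
      mul' R (A ⊗[R] C) ∘ₗ (f.rTensor C).lTensor (A ⊗[R] C) from congr($this (x ⊗ₜ[R] y))
  ext
  simp

theorem bialgebra_with_projection_is_rightHopfModuleAlgebra_general
    {R A H : Type*} [CommSemiring R] [Semiring A] [Bialgebra R A] [Semiring H] [Bialgebra R H]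
    (i : H →ₐc[R] A) (π : A →ₐc[R] H) (hπi : ∀ h : H, π (i h) = h) :
    let act : A ⊗[R] H →ₗ[R] A := mul' R A ∘ₗ (i : H →ₗ[R] A).lTensor A
    let δ : A →ₗ[R] A ⊗[R] H := (π : A →ₗ[R] H).lTensor A ∘ₗ comul
    (∀ a : A,
      TensorProduct.assoc R A H H (δ.rTensor H (δ a)) =
        (comul (R := R) (A := H)).lTensor A (δ a)) ∧
    (∀ a : A, TensorProduct.rid R A ((counit (R := R) (A := H)).lTensor A (δ a)) = a) ∧
    (∀ a : A, act (a ⊗ₜ[R] (1 : H)) = a) ∧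
    (∀ (a : A) (h h' : H), act (act (a ⊗ₜ[R] h) ⊗ₜ[R] h') = act (a ⊗ₜ[R] (h * h'))) ∧
    (∀ (a : A) (h : H),
      δ (act (a ⊗ₜ[R] h)) =
        map act (mul' R H) (tensorTensorTensorComm R A H H H (δ a ⊗ₜ[R] comul h))) ∧
    (∀ (a b : A) (h : H), act ((a * b) ⊗ₜ[R] h) = a * act (b ⊗ₜ[R] h)) ∧
    (∀ a b : A,
      δ (a * b) =
        map (mul' R A) (mul' R H) (tensorTensorTensorComm R A H A H (δ a ⊗ₜ[R] δ b))) := by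
  intro act δ
  have act_tmul (a : A) (h : H) : act (a ⊗ₜ[R] h) = a * i h := rfl
  have δ_mul (a b : A) : δ (a * b) = δ a * δ b := coactionAlong_mul π a b
  refine ⟨coactionAlong_coassoc (π : A →ₗc[R] H), fun a ↦ ?counit, fun a ↦ ?act_one,
    fun a h h' ↦ ?act_act, fun a h ↦ ?hopfModule, fun a b h ↦ ?mul_act, fun a b ↦ ?coaction_mul⟩
  case counit =>
    exact congr(TensorProduct.rid R A $(lTensor_counit_coactionAlong (π : A →ₗc[R] H) a)).trans
      (by simp)
  case act_one => rw [act_tmul, map_one, mul_one]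
  case act_act => rw [act_tmul, act_tmul, act_tmul, map_mul, mul_assoc]
  case hopfModule =>
    have δ_i : δ (i h) = (i : H →ₗ[R] A).rTensor H (comul h) :=
      coactionAlong_apply_of_leftInverse (π := (π : A →ₗc[R] H)) (i := (i : H →ₗc[R] A)) hπi h
    rw [act_tmul, δ_mul, δ_i, map_mul'_tensorTensorTensorComm_tmul]
  case mul_act => rw [act_tmul, act_tmul, mul_assoc]
  case coaction_mul =>
    rw [δ_mul]
    exact congr($(mul'_tensor) (δ a ⊗ₜ[R] δ b))

theorem bialgebra_with_projection_is_rightHopfModuleAlgebra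
    (K : Type*) [Field K] [CharZero K]
    (A : Type*) [Ring A] [Bialgebra K A]
    (H : Type*) [Ring H] [HopfAlgebra K H]
    (i : H →ₐc[K] A) (π : A →ₐc[K] H)
    (hπi : ∀ h : H, π (i h) = h) :
    -- the action a · h = a i(h) and the coaction δ_R(a) = ∑ a₍₁₎ ⊗ π(a₍₂₎)
    let act : A ⊗[K] H →ₗ[K] A :=
      LinearMap.mul' K A ∘ₗ (LinearMap.lTensor A (i : H →ₗ[K] A))
    let δ : A →ₗ[K] A ⊗[K] H :=
      (LinearMap.lTensor A (π : A →ₗ[K] H)) ∘ₗ Coalgebra.comul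
    -- δ is a coassociative counital right H-comodule structure
    (∀ a : A,
      (TensorProduct.assoc K A H H) ((δ.rTensor H) (δ a)) =
        ((Coalgebra.comul (R := K) (A := H)).lTensor A) (δ a)) ∧
    (∀ a : A,
      (TensorProduct.rid K A) (((Coalgebra.counit (R := K) (A := H)).lTensor A) (δ a)) = a) ∧
    -- the action is a unital associative right H-action
    (∀ a : A, act (a ⊗ₜ[K] (1 : H)) = a) ∧
    (∀ (a : A) (h h' : H),
      act (act (a ⊗ₜ[K] h) ⊗ₜ[K] h') = act (a ⊗ₜ[K] (h * h'))) ∧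
    -- Hopf module compatibility: δ(a · h) = δ(a)Δ(h)
    (∀ (a : A) (h : H),
      δ (act (a ⊗ₜ[K] h)) =
        (TensorProduct.map act (LinearMap.mul' K H))
          ((TensorProduct.tensorTensorTensorComm K A H H H)
            (δ a ⊗ₜ[K] Coalgebra.comul h))) ∧
    -- (ab) · h = a (b · h)
    (∀ (a b : A) (h : H), act ((a * b) ⊗ₜ[K] h) = a * act (b ⊗ₜ[K] h)) ∧
    -- δ(ab) = ∑ a₍₁₎b₍₁₎ ⊗ π(a₍₂₎)π(b₍₂₎)
    (∀ a b : A,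
      δ (a * b) =
        (TensorProduct.map (LinearMap.mul' K A) (LinearMap.mul' K H))
          ((TensorProduct.tensorTensorTensorComm K A H A H) (δ a ⊗ₜ[K] δ b))) :=
  bialgebra_with_projection_is_rightHopfModuleAlgebra_general i π hπi
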